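/- Let A be a left self-injective semiprimary ring. Then Hom_A(T, A) ≠ 0 for every simple right A-module T; equivalently, every simple right A-module embeds into A as a right module. -/

import Mathlib

universe u v

open Cardinal

/-- A ring is *semiprimary* if its Jacobson radical `J` is nilpotent
(`J ^ n = 0`, expressed elementwise: every product of `n` elements of `J` vanishes)
and the quotient ring `A / J` is a semisimple ring. -/
def IsSemiprimary (A : Type*) [Ring A] : Prop :=
  IsSemisimpleRing (RingCon.Quotient (⊥ : TwoSidedIdeal A).jacobson.ringCon) ∧
  ∃ n : ℕ, 0 < n ∧ ∀ f : Fin n → A,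
    (∀ i, f i ∈ Ideal.jacobson (⊥ : Ideal A)) → (List.ofFn f).prod = 0

/-- A ring is *quasi-Frobenius* if it is left self-injective and left artinian. -/
def IsQuasiFrobenius (A : Type*) [Ring A] : Prop :=
  Module.Injective A A ∧ IsArtinianRing A

/-!
Let `J` be the Jacobson radical of `A` and let `M` be a proper right ideal. Since `A / J` is
semisimple, `M ≤ a A + J` for a single `a ∈ M`, and `a` has no right inverse. If right
multiplication by `a` were injective, left self-injectivity would extend its inverse to `A` and
produce a right inverse of `a`. So the left annihilator `N` of `a` is nonzero. It contains a
minimal left ideal, because its last nonzero multiple `J ^ k N` is a module over `A / J`; and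
minimal left ideals are killed on the right by `J`, again by self-injectivity. Hence some `x ≠ 0`
satisfies `x M = 0`. When `M` is the annihilator of a generator `t` of a simple right module `T`,
sending `t` to `x` embeds `T` into `A`.
-/

section Modules

variable {R : Type*} [Ring R] {M N : Type*} [AddCommGroup M] [Module R M]
  [AddCommGroup N] [Module R N]

theorem exists_linearMap_apply_eq_of_span_singleton_eq_top {m : M} {n : N}
    (hm : Submodule.span R {m} = ⊤) (h : ∀ r : R, r • m = 0 → r • n = 0) :
    ∃ f : M →ₗ[R] N, f m = n :=
  ⟨(LinearPMap.mkSpanSingleton' m n h).toFun ∘ₗ (LinearEquiv.ofTop _ hm).symm.toLinearMap,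
    LinearPMap.mkSpanSingleton'_apply_self m n h _⟩

theorem exists_linearMap_apply_eq_of_moduleInjective {Q : Type v} [AddCommGroup Q] [Module R Q]
    [Small.{v} R] [Module.Injective R Q] {m : M} {q : Q} (h : ∀ r : R, r • m = 0 → r • q = 0) :
    ∃ f : M →ₗ[R] Q, f m = q := by
  let f₀ : M →ₗ.[R] Q := LinearPMap.mkSpanSingleton' m q h
  obtain ⟨f, hf⟩ := Module.Baer.extension_property (.of_injective ‹_›) f₀.domain.subtype
    f₀.domain.injective_subtype f₀.toFun
  exact ⟨f, (LinearMap.congr_fun hf ⟨m, Submodule.mem_span_singleton_self m⟩).trans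
    (LinearPMap.mkSpanSingleton'_apply_self m q h _)⟩

end Modules

section Rings

theorem pow_le_of_forall_list_prod_mem {A : Type*} [Semiring A] (I : Ideal A) (n : ℕ)
    (K : Ideal A) (h : ∀ f : Fin n → A, (∀ i, f i ∈ I) → (List.ofFn f).prod ∈ K) :
    I ^ n ≤ K := by
  induction n generalizing K with
  | zero =>
    have one_mem : (1 : A) ∈ K := by simpa using h ![] (fun i ↦ i.elim0)
    exact le_top.trans_eq ((Ideal.eq_top_iff_one K).2 one_mem).symm
  | succ n ih =>
    rw [I.pow_succ, Ideal.mul_le]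
    intro x hx y hy
    refine ih (Submodule.comap (LinearMap.toSpanSingleton A A y) K) (fun f hf ↦ ?_) hx
    have := h (Fin.snoc f y) (Fin.lastCases (by simpa) (by simpa))
    simpa [List.ofFn_succ', -List.ofFn_succ] using this

variable {A : Type*} [Ring A]

theorem isUnit_of_sub_one_mem_ringJacobson {r : A} (hr : r - 1 ∈ Ring.jacobson A) :
    IsUnit r := by
  have exists_left_inv : ∀ s : A, s - 1 ∈ Ring.jacobson A → ∃ t, t * s = 1 := fun s hs ↦ by
    rw [← Ideal.jacobson_bot] at hs
    obtain ⟨t, ht⟩ := Ideal.exists_mul_sub_mem_of_sub_one_mem_jacobson s hs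
    exact ⟨t, sub_eq_zero.1 ht⟩
  obtain ⟨s, hsr⟩ := exists_left_inv r hr
  have hs : s - 1 ∈ Ring.jacobson A := by
    have : s - 1 = -(s * (r - 1)) := by rw [mul_sub, hsr, mul_one, neg_sub]
    exact this ▸ neg_mem (Ideal.mul_mem_left _ s hr)
  obtain ⟨t, hts⟩ := exists_left_inv s hs
  have hrs : r * s = 1 := left_inv_eq_right_inv hts hsr ▸ hts
  exact ⟨⟨r, s, hrs, hsr⟩, rfl⟩

theorem exists_mem_le_span_singleton_sup_ker {S : Type*} [Ring S] [IsPrincipalIdealRing S]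
    {f : A →+* S} (hf : Function.Surjective f) (I : Ideal A) :
    ∃ a ∈ I, I ≤ Ideal.span {a} ⊔ RingHom.ker f := by
  obtain ⟨e, he : I.map f = Ideal.span {e}⟩ := IsPrincipalIdealRing.principal (I.map f)
  have e_mem : e ∈ I.map f := he ▸ Ideal.mem_span_singleton_self e
  obtain ⟨a, ha, rfl⟩ := (Ideal.mem_map_iff_of_surjective f hf).1 e_mem
  refine ⟨a, ha, ?_⟩
  rw [← Ideal.comap_map_of_surjective' f hf, Ideal.map_span, Set.image_singleton, ← he]
  exact Ideal.le_comap_map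

theorem IsSemiprimary.isSemiprimaryRing (h : IsSemiprimary A) : IsSemiprimaryRing A := by
  obtain ⟨hss, n, -, hn⟩ := h
  refine ⟨?_, n, le_bot_iff.1 (pow_le_of_forall_list_prod_mem _ n ⊥ ?_)⟩
  · have hker : (⊥ : TwoSidedIdeal A).jacobson.ringCon ≤
        RingCon.ker (Ideal.Quotient.mk (Ring.jacobson A)) := fun x y hxy ↦ by
      rw [RingCon.ker_apply, Ideal.Quotient.eq, ← Ideal.jacobson_bot]
      simpa [TwoSidedIdeal.jacobson] using (TwoSidedIdeal.rel_iff _ x y).1 hxy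
    exact RingHom.isSemisimpleRing_of_surjective (RingCon.lift _ _ hker)
      (RingCon.lift_surjective_iff.2 Ideal.Quotient.mk_surjective)
  · simpa only [Ideal.jacobson_bot, Ideal.mem_bot] using hn

instance isAtomic_submodule_of_isSemiprimaryRing [IsSemiprimaryRing A] {M : Type*}
    [AddCommGroup M] [Module A M] : IsAtomic (Submodule A M) := by
  obtain ⟨n, hn⟩ := IsSemiprimaryRing.isNilpotent (R := A)
  suffices h : ∀ (n : ℕ) (N : Submodule A M), Ring.jacobson A ^ n • N = ⊥ →
      N = ⊥ ∨ ∃ S, IsAtom S ∧ S ≤ N from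
    ⟨fun N ↦ h n N (by rw [hn]; simp)⟩
  intro n
  induction n with
  | zero => intro N hN; left; simpa [Submodule.pow_zero, Ideal.one_eq_top] using hN
  | succ n ih =>
    intro N hN
    rw [Submodule.pow_succ, Submodule.mul_smul] at hN
    rcases ih _ hN with h | ⟨S, hS, hSN⟩
    · have torsion : Module.IsTorsionBySet A N (Ring.jacobson A : Set A) := fun y r ↦
        Subtype.ext ((Submodule.mem_bot A).1 (h ▸ Submodule.smul_mem_smul r.2 y.2))
      let := torsion.module
      have : IsSemisimpleModule A N := torsion.isSemisimpleModule_iff.1 inferInstance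
      exact (IsSemisimpleModule.eq_bot_or_exists_simple_le N).imp_right
        fun ⟨S, hSN, hS⟩ ↦ ⟨S, hS.isAtom, hSN⟩
    · exact .inr ⟨S, hS, hSN.trans Submodule.smul_le_right⟩

end Rings

section SelfInjective

variable {A : Type u} [Ring A] [Module.Injective A A]

theorem exists_mul_eq_of_selfInjective {x y : A} (h : ∀ a, a * y = 0 → a * x = 0) :
    ∃ b, y * b = x := by
  obtain ⟨f, hf⟩ := exists_linearMap_apply_eq_of_moduleInjective (R := A) (m := y) (q := x) h
  exact ⟨f 1, by rw [← hf, ← smul_eq_mul, ← map_smul, smul_eq_mul, mul_one]⟩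

theorem mul_eq_zero_of_mem_simple_of_mem_ringJacobson {S : Ideal A} [IsSimpleModule A S] {x j : A}
    (hx : x ∈ S) (hj : j ∈ Ring.jacobson A) : x * j = 0 := by
  rcases LinearMap.injective_or_eq_zero (LinearMap.toSpanSingleton A A j ∘ₗ S.subtype) with
    hinj | hzero
  · obtain ⟨b, hb⟩ : ∃ b, x * j * b = x := exists_mul_eq_of_selfInjective fun a ha ↦ by
      have : (⟨a * x, S.mul_mem_left a hx⟩ : S) = 0 := hinj (by simpa [mul_assoc] using ha)
      exact congrArg Subtype.val this
    have hunit : IsUnit (1 - j * b) := isUnit_of_sub_one_mem_ringJacobson <| by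
      simpa using Ideal.mul_mem_right b _ hj
    have hx0 : x * (1 - j * b) = 0 := by rw [mul_sub, mul_one, ← mul_assoc, hb, sub_self]
    rw [hunit.mul_left_eq_zero.1 hx0, zero_mul]
  · exact LinearMap.congr_fun hzero ⟨x, hx⟩

theorem exists_ne_zero_mul_eq_zero_and_mul_ringJacobson_eq_zero [IsAtomic (Ideal A)] {a : A}
    (ha : ∀ b, a * b ≠ 1) :
    ∃ x ≠ 0, x * a = 0 ∧ ∀ j ∈ Ring.jacobson A, x * j = 0 := by
  have ker_ne_bot : LinearMap.ker (LinearMap.toSpanSingleton A A a) ≠ ⊥ := fun hker ↦ by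
    obtain ⟨b, hb⟩ : ∃ b, a * b = 1 := exists_mul_eq_of_selfInjective fun c hc ↦ by
      simpa using LinearMap.ker_eq_bot'.1 hker c hc
    exact ha b hb
  obtain ⟨S, hS, hSker⟩ := (eq_bot_or_exists_atom_le _).resolve_left ker_ne_bot
  obtain ⟨x, hxS, hx⟩ := S.ne_bot_iff.1 hS.1
  have := isSimpleModule_iff_isAtom.2 hS
  exact ⟨x, hx, hSker hxS, fun j ↦ mul_eq_zero_of_mem_simple_of_mem_ringJacobson hxS⟩

theorem exists_ne_zero_forall_mul_unop_eq_zero [IsSemisimpleRing (A ⧸ Ring.jacobson A)]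
    [IsAtomic (Ideal A)] {M : Ideal Aᵐᵒᵖ} (hM : M ≠ ⊤) :
    ∃ x : A, x ≠ 0 ∧ ∀ m ∈ M, x * m.unop = 0 := by
  let π := Ideal.Quotient.mk (Ring.jacobson A)
  have hπ : Function.Surjective (RingHom.op π) := fun s ↦ by
    obtain ⟨a, ha⟩ := Ideal.Quotient.mk_surjective s.unop
    exact ⟨.op a, MulOpposite.unop_injective ha⟩
  obtain ⟨a, haM, hle⟩ := exists_mem_le_span_singleton_sup_ker hπ M
  have not_right_inv : ∀ b, a.unop * b ≠ 1 := fun b hb ↦ (Ideal.ne_top_iff_one M).1 hM <| by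
    have : MulOpposite.op b * a = 1 := MulOpposite.unop_injective hb
    exact this ▸ M.mul_mem_left (.op b) haM
  obtain ⟨x, hx, hxa, hxJ⟩ := exists_ne_zero_mul_eq_zero_and_mul_ringJacobson_eq_zero not_right_inv
  refine ⟨x, hx, fun m hm ↦ ?_⟩
  obtain ⟨_, hs, k, hk, rfl⟩ := Submodule.mem_sup.1 (hle hm)
  obtain ⟨b, rfl⟩ := Ideal.mem_span_singleton'.1 hs
  have hkJ : k.unop ∈ Ring.jacobson A :=
    Ideal.Quotient.eq_zero_iff_mem.1 (congrArg MulOpposite.unop hk)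
  rw [MulOpposite.unop_add, MulOpposite.unop_mul, mul_add, ← mul_assoc, hxa, zero_mul, zero_add,
    hxJ _ hkJ]

end SelfInjective

theorem hom_simple_right_ne_zero_of_selfinjective_semiprimary_general
    (A : Type u) [Ring A] [IsSemisimpleRing (A ⧸ Ring.jacobson A)] [IsAtomic (Ideal A)]
    [Module.Injective A A] (T : Type v) [AddCommGroup T] [Module Aᵐᵒᵖ T] [IsSimpleModule Aᵐᵒᵖ T] :
    (∃ f : T →ₗ[Aᵐᵒᵖ] A, f ≠ 0) ∧ ∃ f : T →ₗ[Aᵐᵒᵖ] A, Function.Injective f := by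
  have := IsSimpleModule.nontrivial Aᵐᵒᵖ T
  obtain ⟨t, ht⟩ := exists_ne (0 : T)
  have ann_ne_top : LinearMap.ker (LinearMap.toSpanSingleton Aᵐᵒᵖ T t) ≠ ⊤ :=
    fun h ↦ ht (by simpa using (Ideal.eq_top_iff_one _).1 h)
  obtain ⟨x, hx, hxM⟩ := exists_ne_zero_forall_mul_unop_eq_zero ann_ne_top
  obtain ⟨f, hf⟩ := exists_linearMap_apply_eq_of_span_singleton_eq_top
    (IsSimpleModule.span_singleton_eq_top Aᵐᵒᵖ ht) hxM
  have hf0 : f ≠ 0 := fun h ↦ hx (by rw [← hf, h, LinearMap.zero_apply])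
  exact ⟨⟨f, hf0⟩, f, LinearMap.injective_of_ne_zero hf0⟩

/-- For a left self-injective semiprimary ring `A`, every simple right `A`-module `T`
satisfies `Hom_A(T, A) ≠ 0`; equivalently, `T` embeds into `A` as a right module. -/
theorem hom_simple_right_ne_zero_of_selfinjective_semiprimary
    (A : Type u) [Ring A] (hsp : IsSemiprimary A) (hinj : Module.Injective A A) :
    ∀ (T : Type v) [AddCommGroup T] [Module Aᵐᵒᵖ T], IsSimpleModule Aᵐᵒᵖ T →
      (∃ f : T →ₗ[Aᵐᵒᵖ] A, f ≠ 0) ∧ ∃ f : T →ₗ[Aᵐᵒᵖ] A, Function.Injective f := by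
  intro T _ _ _
  have := hsp.isSemiprimaryRing
  exact hom_simple_right_ne_zero_of_selfinjective_semiprimary_general A T
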